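/- The pair (i, α) defined above satisfies the compatibility condition α ∘ Ad(g) = Ad(i(g)) ∘ α for all g ∈ Q, i.e. for every g ∈ Q and A ∈ sl(n+2,ℝ): α(g A g^{-1}) = i(g) α(A) i(g)^{-1}. -/

import Mathlib

/-- Index type for block decomposition of size 1, n, 1 (source side). -/
abbrev Idx (n : ℕ) := Unit ⊕ Fin n ⊕ Unit

/-- Index type for block decomposition of sizes 1, 1, n, n (target side). -/
abbrev Jdx (n : ℕ) := Unit ⊕ Unit ⊕ Fin n ⊕ Fin n

/-- The linear map `α : sl(n+2,ℝ) → sl(2n+2,ℝ)` of the paper, written blockwise: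
for `A = [[a,u,d],[x,B,v],[z,y,c]]` (blocks 1, n, 1),
`α(A) = [[(a−c)/2, d, u/2, vᵀ/2], [z, (c−a)/2, y/2, −xᵀ/2],
[x, v, B−((a+c)/2)·id, 0], [yᵀ, −uᵀ, 0, −Bᵀ+((a+c)/2)·id]]` (blocks 1, 1, n, n). -/
noncomputable def alphaMap {n : ℕ} (A : Matrix (Idx n) (Idx n) ℝ) : Matrix (Jdx n) (Jdx n) ℝ :=
  Matrix.of fun i j =>
    match i, j with
    | Sum.inl _, Sum.inl _ =>
        (A (Sum.inl ()) (Sum.inl ()) - A (Sum.inr (Sum.inr ())) (Sum.inr (Sum.inr ()))) / 2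
    | Sum.inl _, Sum.inr (Sum.inl _) => A (Sum.inl ()) (Sum.inr (Sum.inr ()))
    | Sum.inl _, Sum.inr (Sum.inr (Sum.inl k)) => A (Sum.inl ()) (Sum.inr (Sum.inl k)) / 2
    | Sum.inl _, Sum.inr (Sum.inr (Sum.inr k)) => A (Sum.inr (Sum.inl k)) (Sum.inr (Sum.inr ())) / 2
    | Sum.inr (Sum.inl _), Sum.inl _ => A (Sum.inr (Sum.inr ())) (Sum.inl ())
    | Sum.inr (Sum.inl _), Sum.inr (Sum.inl _) =>
        (A (Sum.inr (Sum.inr ())) (Sum.inr (Sum.inr ())) - A (Sum.inl ()) (Sum.inl ())) / 2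
    | Sum.inr (Sum.inl _), Sum.inr (Sum.inr (Sum.inl k)) =>
        A (Sum.inr (Sum.inr ())) (Sum.inr (Sum.inl k)) / 2
    | Sum.inr (Sum.inl _), Sum.inr (Sum.inr (Sum.inr k)) =>
        -(A (Sum.inr (Sum.inl k)) (Sum.inl ())) / 2
    | Sum.inr (Sum.inr (Sum.inl k)), Sum.inl _ => A (Sum.inr (Sum.inl k)) (Sum.inl ())
    | Sum.inr (Sum.inr (Sum.inl k)), Sum.inr (Sum.inl _) =>
        A (Sum.inr (Sum.inl k)) (Sum.inr (Sum.inr ()))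
    | Sum.inr (Sum.inr (Sum.inl k)), Sum.inr (Sum.inr (Sum.inl l)) =>
        A (Sum.inr (Sum.inl k)) (Sum.inr (Sum.inl l)) -
          (if k = l then (A (Sum.inl ()) (Sum.inl ()) +
            A (Sum.inr (Sum.inr ())) (Sum.inr (Sum.inr ()))) / 2 else 0)
    | Sum.inr (Sum.inr (Sum.inl _)), Sum.inr (Sum.inr (Sum.inr _)) => 0
    | Sum.inr (Sum.inr (Sum.inr k)), Sum.inl _ => A (Sum.inr (Sum.inr ())) (Sum.inr (Sum.inl k))
    | Sum.inr (Sum.inr (Sum.inr k)), Sum.inr (Sum.inl _) => -(A (Sum.inl ()) (Sum.inr (Sum.inl k)))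
    | Sum.inr (Sum.inr (Sum.inr _)), Sum.inr (Sum.inr (Sum.inl _)) => 0
    | Sum.inr (Sum.inr (Sum.inr k)), Sum.inr (Sum.inr (Sum.inr l)) =>
        -(A (Sum.inr (Sum.inl l)) (Sum.inr (Sum.inl k))) +
          (if k = l then (A (Sum.inl ()) (Sum.inl ()) +
            A (Sum.inr (Sum.inr ())) (Sum.inr (Sum.inr ()))) / 2 else 0)

/-- The matrix `[[p,0,s],[0,R,0],[0,0,q]]` representing an element of `Q`. -/
noncomputable def qMat {n : ℕ} (p s q : ℝ) (R : Matrix (Fin n) (Fin n) ℝ) : Matrix (Idx n) (Idx n) ℝ :=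
  Matrix.of fun i j =>
    match i, j with
    | Sum.inl _, Sum.inl _ => p
    | Sum.inl _, Sum.inr (Sum.inr _) => s
    | Sum.inr (Sum.inl k), Sum.inr (Sum.inl l) => R k l
    | Sum.inr (Sum.inr _), Sum.inr (Sum.inr _) => q
    | _, _ => 0

/-- The map `i : Q → P̃` of the paper on representative matrices. -/
noncomputable def iMap {n : ℕ} (p s q : ℝ) (R : Matrix (Fin n) (Fin n) ℝ) :
    Matrix (Jdx n) (Jdx n) ℝ :=
  Matrix.of fun i j =>
    match i, j with
    | Sum.inl _, Sum.inl _ => Real.sign (q / p) * Real.sqrt |p / q|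
    | Sum.inl _, Sum.inr (Sum.inl _) => Real.sign (q / p) * (s / p) * Real.sqrt |p / q|
    | Sum.inr (Sum.inl _), Sum.inr (Sum.inl _) => Real.sqrt |q / p|
    | Sum.inr (Sum.inr (Sum.inl k)), Sum.inr (Sum.inr (Sum.inl l)) =>
        q⁻¹ * Real.sqrt |q / p| * R k l
    | Sum.inr (Sum.inr (Sum.inr k)), Sum.inr (Sum.inr (Sum.inr l)) =>
        p * Real.sqrt |q / p| * R⁻¹ l k
    | _, _ => 0

/-!
Group the two one-dimensional blocks of `g ∈ Q` into `h = [[p, s], [0, q]]`, so that `g = h ⊕ R`.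
Up to the scalar `q⁻¹ √|q/p|`, which conjugation does not see, `i(g)` is
`h ⊕ R ⊕ det(h) (Rᵀ)⁻¹`. If `A = [[M, Y], [X, B]]` in the grouped blocks, then `α(A)` is assembled
from `M`, `B`, `X`, `Y`, `tr M` and the twisted transposes `J Xᵀ`, `-Yᵀ J`, where `J` is the
standard area form on the plane. Equivariance therefore reduces to the fact that a 2 × 2 matrix
scales the area form by its determinant.
-/

open Matrix

section AreaForm

variable {K : Type*} [CommRing K]

/-- The Gram matrix of the standard area form on `K²`, with which `α` twists the transposes of its
off-diagonal blocks. -/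
def areaForm (K : Type*) [CommRing K] : Matrix (Fin 2) (Fin 2) K := !![0, 1; -1, 0]

lemma areaForm_mul {m : Type*} (Z : Matrix (Fin 2) m K) :
    areaForm K * Z = of ![Z 1, -Z 0] := by
  ext i k
  fin_cases i <;> simp [areaForm, mul_apply]

lemma mul_areaForm {m : Type*} (Z : Matrix m (Fin 2) K) :
    Z * areaForm K = of fun k => ![-Z k 1, Z k 0] := by
  ext k j
  fin_cases j <;> simp [areaForm, mul_apply]

lemma mul_areaForm_mul_transpose (h : Matrix (Fin 2) (Fin 2) K) :
    h * areaForm K * hᵀ = h.det • areaForm K := by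
  ext i j
  fin_cases i <;> fin_cases j <;> simp [areaForm, mul_apply, det_fin_two] <;> ring

lemma transpose_mul_areaForm_mul (h : Matrix (Fin 2) (Fin 2) K) :
    hᵀ * areaForm K * h = h.det • areaForm K := by
  simpa only [transpose_transpose, det_transpose] using mul_areaForm_mul_transpose hᵀ

variable {m : Type*} [Fintype m] [DecidableEq m]

lemma mul_areaForm_mul_transpose_of_mul_eq {h : Matrix (Fin 2) (Fin 2) K} {R : Matrix m m K}
    {X X' : Matrix m (Fin 2) K} (hR : IsUnit R.det) (hX : R * X = X' * h) :
    h * (areaForm K * Xᵀ) = areaForm K * X'ᵀ * (h.det • R⁻¹ᵀ) := by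
  have hXT : Xᵀ = hᵀ * X'ᵀ * R⁻¹ᵀ := by
    rw [← transpose_mul, ← hX, ← transpose_mul, nonsing_inv_mul_cancel_left R X hR]
  calc h * (areaForm K * Xᵀ) = h * areaForm K * hᵀ * X'ᵀ * R⁻¹ᵀ := by
        rw [hXT]; simp only [Matrix.mul_assoc]
    _ = areaForm K * X'ᵀ * (h.det • R⁻¹ᵀ) := by
        rw [mul_areaForm_mul_transpose, Matrix.smul_mul, Matrix.smul_mul, Matrix.mul_smul]

lemma transpose_mul_areaForm_mul_of_mul_eq {h : Matrix (Fin 2) (Fin 2) K} {R : Matrix m m K}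
    {Y Y' : Matrix (Fin 2) m K} (hR : IsUnit R.det) (hY : h * Y = Y' * R) :
    (h.det • R⁻¹ᵀ) * (Yᵀ * areaForm K) = Y'ᵀ * areaForm K * h := by
  have hYT : Y'ᵀ = R⁻¹ᵀ * Yᵀ * hᵀ := by
    rw [Matrix.mul_assoc, ← transpose_mul, hY, ← transpose_mul,
      mul_nonsing_inv_cancel_right R Y' hR]
  calc (h.det • R⁻¹ᵀ) * (Yᵀ * areaForm K) = R⁻¹ᵀ * Yᵀ * (hᵀ * areaForm K * h) := by
        rw [transpose_mul_areaForm_mul, Matrix.smul_mul, Matrix.mul_smul, Matrix.mul_assoc]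
    _ = Y'ᵀ * areaForm K * h := by
        rw [hYT]; simp only [Matrix.mul_assoc]

end AreaForm

section Semiconj

lemma semiconjBy_sub_smul_one {K S : Type*} [CommRing K] [Ring S] [Algebra K S] {g a a' : S}
    (t : K) (h : SemiconjBy g a a') : SemiconjBy g (a - t • 1) (a' - t • 1) :=
  h.sub_right ((SemiconjBy.one_right g).smul_right t)

variable {K m : Type*} [CommRing K] [Fintype m]

lemma semiconjBy_fromBlocks_iff {l : Type*} [Fintype l] {g A A' : Matrix l l K}
    {k D D' : Matrix m m K} {B B' : Matrix l m K} {C C' : Matrix m l K} :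
    SemiconjBy (fromBlocks g 0 0 k) (fromBlocks A B C D) (fromBlocks A' B' C' D') ↔
      SemiconjBy g A A' ∧ g * B = B' * k ∧ k * C = C' * g ∧ SemiconjBy k D D' := by
  simp only [SemiconjBy, fromBlocks_multiply, fromBlocks_inj, Matrix.zero_mul, Matrix.mul_zero,
    add_zero, zero_add]

variable [DecidableEq m]

lemma trace_eq_of_semiconjBy {g A A' : Matrix m m K} (hg : IsUnit g) (h : SemiconjBy g A A') :
    A'.trace = A.trace := by
  have hA : A' = g * A * g⁻¹ := by
    rw [h.eq, mul_nonsing_inv_cancel_right _ _ ((isUnit_iff_isUnit_det g).1 hg)]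
  rw [hA, trace_conj hg]

lemma semiconjBy_transpose_nonsing_inv {g A A' : Matrix m m K} (hg : IsUnit g)
    (h : SemiconjBy g A A') : SemiconjBy g⁻¹ᵀ Aᵀ A'ᵀ := by
  obtain ⟨u, rfl⟩ := hg
  have hinv : SemiconjBy (u : Matrix m m K)⁻¹ A' A := by
    rw [← coe_units_inv]
    exact h.units_inv_symm_left
  rw [SemiconjBy, ← transpose_mul, ← transpose_mul, hinv.eq]

end Semiconj

section GroupedLift

variable {K m : Type*} [CommRing K] [Fintype m] [DecidableEq m]

/-- The map `h ⊕ R ↦ h ⊕ R ⊕ det(h) (Rᵀ)⁻¹`, which is the map `i` up to scalars and the grouping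
of the two one-dimensional blocks. -/
noncomputable def groupedLift (h : Matrix (Fin 2) (Fin 2) K) (R : Matrix m m K) :
    Matrix (Fin 2 ⊕ (m ⊕ m)) (Fin 2 ⊕ (m ⊕ m)) K :=
  fromBlocks h 0 0 (fromBlocks R 0 0 (h.det • R⁻¹ᵀ))

lemma isUnit_groupedLift {h : Matrix (Fin 2) (Fin 2) K} {R : Matrix m m K} (hh : IsUnit h)
    (hR : IsUnit R) : IsUnit (groupedLift h R) := by
  have hdet : IsUnit h.det := (isUnit_iff_isUnit_det h).1 hh
  have hdual : IsUnit (h.det • R⁻¹ᵀ) :=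
    ((isUnit_transpose _).2 (isUnit_nonsing_inv_iff.2 hR)).smul hdet.unit
  exact isUnit_fromBlocks_zero₂₁.2 ⟨hh, isUnit_fromBlocks_zero₂₁.2 ⟨hR, hdual⟩⟩

end GroupedLift

section GroupedAlpha

variable {K m : Type*} [Field K] [Fintype m] [DecidableEq m]

/-- The map `α` after grouping the two one-dimensional blocks: it sends `[[M, Y], [X, B]]`, with
`M` of size `2 × 2`, to the matrix with blocks of sizes 2, m, m built from the area form. -/
def groupedAlpha (A : Matrix (Fin 2 ⊕ m) (Fin 2 ⊕ m) K) :
    Matrix (Fin 2 ⊕ (m ⊕ m)) (Fin 2 ⊕ (m ⊕ m)) K :=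
  let τ : K := A.toBlocks₁₁.trace / 2
  let B₀ : Matrix m m K := A.toBlocks₂₂ - τ • 1
  fromBlocks (A.toBlocks₁₁ - τ • 1)
    ((2⁻¹ : K) • fromCols A.toBlocks₁₂ (areaForm K * A.toBlocks₂₁ᵀ))
    (fromRows A.toBlocks₂₁ (-(A.toBlocks₁₂ᵀ * areaForm K)))
    (fromBlocks B₀ 0 0 (-B₀ᵀ))

lemma semiconjBy_groupedAlpha {h : Matrix (Fin 2) (Fin 2) K} {R : Matrix m m K}
    {A A' : Matrix (Fin 2 ⊕ m) (Fin 2 ⊕ m) K} (hh : IsUnit h) (hR : IsUnit R)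
    (hA : SemiconjBy (fromBlocks h 0 0 R) A A') :
    SemiconjBy (groupedLift h R) (groupedAlpha A) (groupedAlpha A') := by
  have hRdet : IsUnit R.det := (isUnit_iff_isUnit_det R).1 hR
  rw [← fromBlocks_toBlocks A, ← fromBlocks_toBlocks A', semiconjBy_fromBlocks_iff] at hA
  obtain ⟨hM, hY, hX, hB⟩ := hA
  have hτ : A'.toBlocks₁₁.trace = A.toBlocks₁₁.trace := trace_eq_of_semiconjBy hh hM
  rw [groupedLift, groupedAlpha, groupedAlpha, hτ]
  refine semiconjBy_fromBlocks_iff.2 ⟨semiconjBy_sub_smul_one _ hM, ?_, ?_,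
    semiconjBy_fromBlocks_iff.2 ⟨semiconjBy_sub_smul_one _ hB, by simp, by simp, ?_⟩⟩
  · rw [Matrix.mul_smul, mul_fromCols, Matrix.smul_mul, fromCols_mul_fromBlocks, hY,
      mul_areaForm_mul_transpose_of_mul_eq hRdet hX]
    simp only [Matrix.mul_zero, add_zero, zero_add]
  · simp only [fromBlocks_mul_fromRows, fromRows_mul, Matrix.zero_mul, neg_zero, add_zero, zero_add,
      hX, Matrix.mul_neg, Matrix.neg_mul, transpose_mul_areaForm_mul_of_mul_eq hRdet hY]
  · exact (semiconjBy_transpose_nonsing_inv hR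
      (semiconjBy_sub_smul_one _ hB)).neg_right.smul_left _

end GroupedAlpha

section Reindexing

variable {n : ℕ}

/-- The grouping of the two one-dimensional blocks of the source, through which `qMat` and
`alphaMap` are read in `2 + n` block form. -/
def idxEquiv (n : ℕ) : Idx n ≃ Fin 2 ⊕ Fin n where
  toFun := Sum.elim (fun _ => .inl 0) (Sum.elim .inr fun _ => .inl 1)
  invFun := Sum.elim ![.inl (), .inr (.inr ())] fun k => .inr (.inl k)
  left_inv := by rintro (_ | _ | _) <;> rfl
  right_inv := by
    rintro (i | _)
    · fin_cases i <;> rfl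
    · rfl

/-- The grouping of the two one-dimensional blocks of the target, through which `iMap` and
`alphaMap` are read in `2 + n + n` block form. -/
def jdxEquiv (n : ℕ) : Jdx n ≃ Fin 2 ⊕ (Fin n ⊕ Fin n) where
  toFun := Sum.elim (fun _ => .inl 0) (Sum.elim (fun _ => .inl 1) .inr)
  invFun := Sum.elim ![.inl (), .inr (.inl ())] fun k => .inr (.inr k)
  left_inv := by rintro (_ | _ | _) <;> rfl
  right_inv := by
    rintro (i | _)
    · fin_cases i <;> rfl
    · rfl

lemma reindex_qMat (p s q : ℝ) (R : Matrix (Fin n) (Fin n) ℝ) :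
    reindexAlgEquiv ℝ ℝ (idxEquiv n) (qMat p s q R) = fromBlocks !![p, s; 0, q] 0 0 R := by
  ext (i | i) (j | j)
  · fin_cases i <;> fin_cases j <;> rfl
  · fin_cases i <;> rfl
  · fin_cases j <;> rfl
  · rfl

lemma reindex_alphaMap (A : Matrix (Idx n) (Idx n) ℝ) :
    reindexAlgEquiv ℝ ℝ (jdxEquiv n) (alphaMap A) =
      groupedAlpha (reindexAlgEquiv ℝ ℝ (idxEquiv n) A) := by
  ext (i | i | i) (j | j | j)
  · fin_cases i <;> fin_cases j <;>
      simp [alphaMap, groupedAlpha, idxEquiv, jdxEquiv, toBlocks₁₁, trace_fin_two] <;> ring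
  · fin_cases i <;> exact div_eq_inv_mul _ _
  · simp only [groupedAlpha, areaForm_mul]
    fin_cases i <;> exact div_eq_inv_mul _ _
  · fin_cases j <;> rfl
  · simp [alphaMap, groupedAlpha, idxEquiv, jdxEquiv, toBlocks₁₁, toBlocks₂₂, trace_fin_two,
      one_apply]
  · rfl
  · simp only [groupedAlpha, mul_areaForm]
    fin_cases j
    · simp [alphaMap, idxEquiv, jdxEquiv, toBlocks₁₂]
    · rfl
  · rfl
  · simp [alphaMap, groupedAlpha, idxEquiv, jdxEquiv, toBlocks₁₁, toBlocks₂₂, trace_fin_two,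
      one_apply, neg_add_eq_sub]

lemma sign_mul_sqrt_abs_inv (x : ℝ) : Real.sign x * √|x⁻¹| = √|x| * x⁻¹ := by
  rcases eq_or_ne x 0 with rfl | hx
  · simp
  have hsqrt : √|x| ≠ 0 := Real.sqrt_ne_zero'.2 (abs_pos.2 hx)
  have hsign : Real.sign x * x = √|x| * √|x| := by
    rw [Real.mul_self_sqrt (abs_nonneg x)]
    rcases hx.lt_or_gt with h | h
    · rw [Real.sign_of_neg h, abs_of_neg h, neg_one_mul]
    · rw [Real.sign_of_pos h, abs_of_pos h, one_mul]
  rw [abs_inv, Real.sqrt_inv]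
  field_simp
  rw [hsign, sq]

lemma reindex_iMap {p q : ℝ} (s : ℝ) (R : Matrix (Fin n) (Fin n) ℝ) (hp : p ≠ 0) (hq : q ≠ 0) :
    reindexAlgEquiv ℝ ℝ (jdxEquiv n) (iMap p s q R) =
      (q⁻¹ * √|q / p|) • groupedLift !![p, s; 0, q] R := by
  have hsign : Real.sign (q / p) * √|p / q| = q⁻¹ * √|q / p| * p := by
    rw [← inv_div q p, sign_mul_sqrt_abs_inv, inv_div]
    ring
  have hsign_s : Real.sign (q / p) * (s / p) * √|p / q| = q⁻¹ * √|q / p| * s := by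
    rw [mul_right_comm, hsign]
    field_simp
  have hsqrt : √|q / p| = q⁻¹ * √|q / p| * q := by field_simp
  have hdual (x : ℝ) : p * √|q / p| * x = q⁻¹ * √|q / p| * (p * q * x) := by field_simp
  ext (i | i | i) (j | j | j) <;> try fin_cases i
  all_goals try fin_cases j
  all_goals simp [iMap, groupedLift, jdxEquiv, hsign, hsign_s, ← hsqrt, ← hdual]

lemma isUnit_upperTriangular_fin_two {K : Type*} [Field K] {p q : K} (s : K) (hp : p ≠ 0)
    (hq : q ≠ 0) : IsUnit !![p, s; 0, q] := by
  simp [isUnit_iff_isUnit_det, det_fin_two_of, hp, hq]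

lemma isUnit_qMat {p q : ℝ} (s : ℝ) {R : Matrix (Fin n) (Fin n) ℝ} (hp : p ≠ 0) (hq : q ≠ 0)
    (hR : IsUnit R) : IsUnit (qMat p s q R) := by
  rw [← isUnit_map_iff (reindexAlgEquiv ℝ ℝ (idxEquiv n)), reindex_qMat]
  exact isUnit_fromBlocks_zero₂₁.2 ⟨isUnit_upperTriangular_fin_two s hp hq, hR⟩

lemma isUnit_iMap {p q : ℝ} (s : ℝ) {R : Matrix (Fin n) (Fin n) ℝ} (hp : p ≠ 0) (hq : q ≠ 0)
    (hR : IsUnit R) : IsUnit (iMap p s q R) := by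
  have hscalar : q⁻¹ * √|q / p| ≠ 0 := by positivity
  rw [← isUnit_map_iff (reindexAlgEquiv ℝ ℝ (jdxEquiv n)), reindex_iMap s R hp hq]
  exact (isUnit_groupedLift (isUnit_upperTriangular_fin_two s hp hq) hR).smul (Units.mk0 _ hscalar)

lemma semiconjBy_alphaMap {p s q : ℝ} {R : Matrix (Fin n) (Fin n) ℝ}
    {A A' : Matrix (Idx n) (Idx n) ℝ} (hp : p ≠ 0) (hq : q ≠ 0) (hR : IsUnit R)
    (hA : SemiconjBy (qMat p s q R) A A') :
    SemiconjBy (iMap p s q R) (alphaMap A) (alphaMap A') := by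
  have hgrouped := hA.map (reindexAlgEquiv ℝ ℝ (idxEquiv n))
  rw [reindex_qMat] at hgrouped
  apply SemiconjBy.of_map (reindexAlgEquiv ℝ ℝ (jdxEquiv n)).injective
  rw [reindex_iMap s R hp hq, reindex_alphaMap, reindex_alphaMap]
  exact (semiconjBy_groupedAlpha (isUnit_upperTriangular_fin_two s hp hq) hR hgrouped).smul_left _

end Reindexing

theorem alphaMap_equivariant_general {n : ℕ} {p q : ℝ} (s : ℝ) {R : Matrix (Fin n) (Fin n) ℝ}
    (hp : p ≠ 0) (hq : q ≠ 0) (hR : IsUnit R.det) (A : Matrix (Idx n) (Idx n) ℝ) :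
    alphaMap (qMat p s q R * A * (qMat p s q R)⁻¹) =
      iMap p s q R * alphaMap A * (iMap p s q R)⁻¹ := by
  have hRunit : IsUnit R := (isUnit_iff_isUnit_det R).2 hR
  have hg := (isUnit_iff_isUnit_det _).1 (isUnit_qMat s hp hq hRunit)
  have hi := (isUnit_iff_isUnit_det _).1 (isUnit_iMap s hp hq hRunit)
  have hconj : SemiconjBy (qMat p s q R) A (qMat p s q R * A * (qMat p s q R)⁻¹) :=
    (nonsing_inv_mul_cancel_right _ _ hg).symm
  rw [(semiconjBy_alphaMap hp hq hRunit hconj).eq, mul_nonsing_inv_cancel_right _ _ hi]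

/-- the pair `(i, α)` satisfies `α ∘ Ad(g) = Ad(i(g)) ∘ α` for all
`g ∈ Q`: for every `g = [[p,0,s],[0,R,0],[0,0,q]] ∈ Q` and trace-free `A`,
`α(g A g⁻¹) = i(g) · α(A) · i(g)⁻¹`. -/
theorem alphaMap_equivariant (n : ℕ) (p s q : ℝ) (R : Matrix (Fin n) (Fin n) ℝ)
    (hp : p ≠ 0) (hq : q ≠ 0) (hR : IsUnit R.det) (hdet : |p * q * R.det| = 1)
    (A : Matrix (Idx n) (Idx n) ℝ) (hA : A.trace = 0) :
    alphaMap (qMat p s q R * A * (qMat p s q R)⁻¹) =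
      iMap p s q R * alphaMap A * (iMap p s q R)⁻¹ :=
  alphaMap_equivariant_general s hp hq hR A
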